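/- Let K ∈ ps(C) and let ω ⊂ Ω_{C°} be a Borel set with Δ(ω) > 0. Then ν_K^{-1}(ω) ⊂ (b(K)/sin Δ(ω)) Bⁿ, where Bⁿ is the closed unit ball and b(K) is the distance of K from the origin. -/

import Mathlib

open MeasureTheory Set Filter
open scoped RealInnerProductSpace ENNReal Topology Pointwise NNReal

noncomputable section

abbrev En (n : ℕ) := EuclideanSpace ℝ (Fin n)

/-- `C` is a pointed closed convex cone with nonempty interior. -/
def IsGoodCone (n : ℕ) (C : Set (En n)) : Prop :=
  IsClosed C ∧ Convex ℝ C ∧ (∀ x ∈ C, ∀ r : ℝ, 0 ≤ r → r • x ∈ C) ∧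
    C ∩ (-C) = {0} ∧ (interior C).Nonempty

/-- The dual cone `C° = {x : ⟨x,y⟩ ≤ 0 ∀ y ∈ C}`. -/
def dualCone (n : ℕ) (C : Set (En n)) : Set (En n) := {x | ∀ y ∈ C, ⟪x, y⟫ ≤ 0}

/-- `Ω_C = S^{n-1} ∩ int C`. -/
def omegaC (n : ℕ) (C : Set (En n)) : Set (En n) := Metric.sphere 0 1 ∩ interior C

/-- `Ω_{C°} = S^{n-1} ∩ int C°`. -/
def omegaDual (n : ℕ) (C : Set (En n)) : Set (En n) :=
  Metric.sphere 0 1 ∩ interior (dualCone n C)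

/-- A pseudo-cone: nonempty closed convex set not containing `0` with `λK ⊆ K` for `λ ≥ 1`. -/
def IsPseudoCone (n : ℕ) (K : Set (En n)) : Prop :=
  K.Nonempty ∧ IsClosed K ∧ Convex ℝ K ∧ (0 : En n) ∉ K ∧ ∀ l : ℝ, 1 ≤ l → l • K ⊆ K

/-- The recession cone of `K`. -/
def recCone (n : ℕ) (K : Set (En n)) : Set (En n) :=
  {z | ∀ x ∈ K, ∀ t : ℝ, 0 ≤ t → x + t • z ∈ K}

/-- A `C`-pseudo-cone: a pseudo-cone with recession cone `C`. -/
def IsCPseudoCone (n : ℕ) (C K : Set (En n)) : Prop := IsPseudoCone n K ∧ recCone n K = C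

/-- The set of outer unit normal vectors of `K` at `x`. -/
def normalsAt (n : ℕ) (K : Set (En n)) (x : En n) : Set (En n) :=
  {u | ‖u‖ = 1 ∧ ∀ y ∈ K, ⟪y, u⟫ ≤ ⟪x, u⟫}

/-- `ν_K^{-1}(ω)`: the boundary points of `K` whose outer unit normal is unique and lies in `ω`. -/
def nuInv (n : ℕ) (K ω : Set (En n)) : Set (En n) :=
  {x | x ∈ frontier K ∧ ∃ u ∈ ω, normalsAt n K x = {u}}

open Classical in
/-- The outer unit normal map `ν_K` (junk value `0` where the normal is not unique). -/
def nuMap (n : ℕ) (K : Set (En n)) (x : En n) : En n :=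
  if h : ∃ u, normalsAt n K x = {u} then h.choose else 0

/-- `Δ(ω)`: the spherical (angular) distance of `ω` from the boundary of `Ω_{C°}`
(the relative boundary of `Ω_{C°}` in the unit sphere is `closure Ω_{C°} \ Ω_{C°}`,
since `Ω_{C°}` is relatively open in the sphere). -/
def sphereAngleDist (n : ℕ) (C ω : Set (En n)) : ℝ :=
  sInf {d | ∃ u ∈ ω, ∃ v ∈ closure (omegaDual n C) \ omegaDual n C,
    d = InnerProductGeometry.angle u v}

/-- `b(K)`: the distance of `K` from the origin. -/
def distOrigin (n : ℕ) (K : Set (En n)) : ℝ := Metric.infDist 0 K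

/-- `C^-(t) = C ∩ H^-(𝔳, t)`. -/
def Cminus (n : ℕ) (C : Set (En n)) (v : En n) (t : ℝ) : Set (En n) :=
  C ∩ {x | ⟪x, v⟫ ≤ t}

/-- The support function `h_K(u) = sup{⟨y,u⟩ : y ∈ K}`. -/
def suppFn (n : ℕ) (K : Set (En n)) (u : En n) : ℝ := sSup ((fun y => ⟪y, u⟫) '' K)

/-- `Θ : C∖{0} → (0,∞)` continuous and homogeneous of degree `-q`. -/
def IsThetaWeight (n : ℕ) (C : Set (En n)) (q : ℝ) (Θ : En n → ℝ) : Prop :=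
  ContinuousOn Θ (C \ {0}) ∧ (∀ y ∈ C \ {0}, 0 < Θ y) ∧
    ∀ y ∈ C \ {0}, ∀ r : ℝ, 0 < r → Θ (r • y) = r ^ (-q) * Θ y

/-- The `Θ`-weighted `n`-dimensional Hausdorff (Lebesgue) measure `H_Θ^n`. -/
def HTheta (n : ℕ) (Θ : En n → ℝ) : Measure (En n) :=
  volume.withDensity fun y => ENNReal.ofReal (Θ y)

/-- The `Θ`-weighted cone-volume measure `V_K^Θ(ω) = H_Θ^n(⋃_{x ∈ ν_K^{-1}(ω)} [0,x])`. -/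
def coneVol (n : ℕ) (Θ : En n → ℝ) (K ω : Set (En n)) : ℝ≥0∞ :=
  HTheta n Θ (⋃ x ∈ nuInv n K ω, segment ℝ (0 : En n) x)

/-- The (unweighted) cone-volume measure `V_K(ω) = H^n(⋃_{x ∈ ν_K^{-1}(ω)} [0,x])`. -/
def coneVolU (n : ℕ) (K ω : Set (En n)) : ℝ≥0∞ :=
  volume (⋃ x ∈ nuInv n K ω, segment ℝ (0 : En n) x)

/-- The `Θ`-weighted surface area measure `S_{n-1}^Θ(K,ω) = ∫_{ν_K^{-1}(ω)} Θ dH^{n-1}`. -/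
def surfTheta (n : ℕ) (Θ : En n → ℝ) (K ω : Set (En n)) : ℝ≥0∞ :=
  ∫⁻ x in nuInv n K ω, ENNReal.ofReal (Θ x) ∂(μH[(n : ℝ) - 1])

/-- `K ∈ K(C,ϖ)`: `K` is a `C`-pseudo-cone that is `C`-determined by `ϖ`. -/
def CDetermined (n : ℕ) (C ϖ K : Set (En n)) : Prop :=
  IsCPseudoCone n C K ∧ K = C ∩ ⋂ u ∈ ϖ, {x | ⟪x, u⟫ ≤ suppFn n K u}

/-- The Wulff shape `[g] = C ∩ ⋂_{u ∈ ϖ} {y : ⟨y,u⟩ ≤ -g(u)}`. -/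
def wulff (n : ℕ) (C ϖ : Set (En n)) (g : En n → ℝ) : Set (En n) :=
  C ∩ ⋂ u ∈ ϖ, {y | ⟪y, u⟫ ≤ -g u}

/-- The `Θ`-weighted covolume `V_Θ(K) = ∫_{C∖K} Θ dH^n`. -/
def covol (n : ℕ) (Θ : En n → ℝ) (C K : Set (En n)) : ℝ≥0∞ := HTheta n Θ (C \ K)

/-- The radial function `ρ_K(v) = min{λ : λv ∈ K}`. -/
def rho (n : ℕ) (K : Set (En n)) (v : En n) : ℝ := sInf {t : ℝ | t • v ∈ K}

/-- The radial map `r_K(v) = ρ_K(v) v`. -/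
def radMap (n : ℕ) (K : Set (En n)) (v : En n) : En n := rho n K v • v

/-- `α_K^{-1}(ω)`: directions `v ∈ Ω_C` with `r_K(v) ∈ ∂'K` (boundary point in `int C` with
unique outer normal) whose unique outer normal lies in `ω`. -/
def alphaInv (n : ℕ) (C K ω : Set (En n)) : Set (En n) :=
  {v ∈ omegaC n C | radMap n K v ∈ frontier K ∧ radMap n K v ∈ interior C ∧
    ∃ u ∈ ω, normalsAt n K (radMap n K v) = {u}}

/-- `μ` is the Borel measure on `Ω_{C°}` representing the `Θ`-weighted cone-volume
measure of `K` (extended by `0` outside `Ω_{C°}`). -/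
def RepsConeVol (n : ℕ) (C : Set (En n)) (Θ : En n → ℝ) (K : Set (En n))
    (μ : Measure (En n)) : Prop :=
  μ (omegaDual n C)ᶜ = 0 ∧
    ∀ ω, MeasurableSet ω → ω ⊆ omegaDual n C → μ ω = coneVol n Θ K ω

/-- `μ` is the Borel measure on `Ω_{C°}` representing the `Θ`-weighted surface area
measure of `K` (extended by `0` outside `Ω_{C°}`). -/
def RepsSurf (n : ℕ) (C : Set (En n)) (Θ : En n → ℝ) (K : Set (En n))
    (μ : Measure (En n)) : Prop :=
  μ (omegaDual n C)ᶜ = 0 ∧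
    ∀ ω, MeasurableSet ω → ω ⊆ omegaDual n C → μ ω = surfTheta n Θ K ω

lemma aux_subset (n : ℕ) (C K : Set (En n)) (hK : IsCPseudoCone n C K) : K ⊆ C := by
  obtain ⟨⟨_, hcl, hconv, _, hl⟩, hrec⟩ := hK
  rw [← hrec]
  intro x hx y hy t ht
  rcases ht.eq_or_lt with rfl | ht
  · simpa using hy
  have key : Tendsto (fun m : ℝ => (1 - m⁻¹) • y + t • x) atTop (𝓝 ((1 - 0 : ℝ) • y + t • x)) :=
    ((tendsto_const_nhds.sub tendsto_inv_atTop_zero).smul_const y).add_const _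
  rw [sub_zero, one_smul] at key
  refine hcl.mem_of_tendsto key ?_
  filter_upwards [eventually_ge_atTop (1 : ℝ), eventually_ge_atTop t⁻¹] with m h1 h2
  have hm : 0 < m := by linarith
  have hmt : 1 ≤ m * t := by
    have := mul_le_mul_of_nonneg_right h2 ht.le
    rwa [inv_mul_cancel₀ ht.ne'] at this
  have hz : (m * t) • x ∈ K := hl _ hmt (smul_mem_smul_set hx)
  have := hconv hy hz (a := 1 - m⁻¹) (b := m⁻¹)
    (by have := inv_le_one_of_one_le₀ h1; linarith) (by positivity) (by ring)
  rwa [smul_smul, ← mul_assoc, inv_mul_cancel₀ hm.ne', one_mul] at this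

lemma aux_perp (n : ℕ) (hn : 2 ≤ n) (u w : En n) (hu : ‖u‖ = 1) (hw : ‖w‖ = 1) :
    ∃ e : En n, ‖e‖ = 1 ∧ ⟪u, e⟫ = 0 ∧ ⟪e, w⟫ = √(1 - ⟪u, w⟫ ^ 2) := by
  have huu : ⟪u, u⟫ = 1 := by rw [real_inner_self_eq_norm_sq, hu]; norm_num
  have hww : ⟪w, w⟫ = 1 := by rw [real_inner_self_eq_norm_sq, hw]; norm_num
  set c := ⟪u, w⟫ with hc
  have hcw : ⟪w, u⟫ = c := real_inner_comm _ _
  have hns : ‖w - c • u‖ ^ 2 = 1 - c ^ 2 := by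
    rw [← real_inner_self_eq_norm_sq]
    simp only [inner_sub_left, inner_sub_right, real_inner_smul_left, real_inner_smul_right,
      huu, hww, hcw, ← hc]
    ring
  have hnq : √(1 - c ^ 2) = ‖w - c • u‖ := by rw [← hns, Real.sqrt_sq (norm_nonneg _)]
  by_cases h0 : w - c • u = 0
  · have hfin : 1 < Module.finrank ℝ (En n) := by
      rw [finrank_euclideanSpace_fin]; omega
    obtain ⟨e, he0, he⟩ : ∃ e : En n, e ≠ 0 ∧ ⟪u, e⟫ = 0 := by
      by_contra! hcon
      have hbot : (ℝ ∙ u)ᗮ = ⊥ := by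
        rw [Submodule.eq_bot_iff]
        intro e he
        by_contra hne
        exact hcon e hne (Submodule.mem_orthogonal_singleton_iff_inner_right.1 he)
      have h1 := Submodule.finrank_add_finrank_orthogonal (ℝ ∙ u)
      rw [hbot, finrank_bot] at h1
      have h2 := finrank_span_singleton (K := ℝ) (v := u) (by rintro rfl; simp at hu)
      omega
    refine ⟨‖e‖⁻¹ • e, ?_, ?_, ?_⟩
    · rw [norm_smul, norm_inv, norm_norm, inv_mul_cancel₀ (norm_ne_zero_iff.2 he0)]
    · rw [real_inner_smul_right, he, mul_zero]
    · rw [hnq, h0, norm_zero, sub_eq_zero.1 h0, real_inner_smul_left, real_inner_smul_right,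
        real_inner_comm, he]
      simp
  · have hpos : ‖w - c • u‖ ≠ 0 := norm_ne_zero_iff.2 h0
    refine ⟨‖w - c • u‖⁻¹ • (w - c • u), ?_, ?_, ?_⟩
    · rw [norm_smul, norm_inv, norm_norm, inv_mul_cancel₀ hpos]
    · rw [real_inner_smul_right, inner_sub_right, real_inner_smul_right, huu, ← hc]; ring
    · rw [hnq, real_inner_smul_left, inner_sub_left, real_inner_smul_left, hww, ← hc]
      field_simp
      rw [hns]

lemma aux_main (n : ℕ) (hn : 2 ≤ n) (C ω : Set (En n)) (u w : En n) (huω : u ∈ ω)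
    (hu : u ∈ omegaDual n C) (hw : ‖w‖ = 1) (hwC : w ∈ C) :
    sphereAngleDist n C ω ≤ Real.arcsin (-⟪u, w⟫) := by
  have hun : ‖u‖ = 1 := by simpa using hu.1
  obtain ⟨e, he, hue, hew⟩ := aux_perp n hn u w hun hw
  have hww : ⟪w, w⟫ = 1 := by rw [real_inner_self_eq_norm_sq, hw]; norm_num
  have huu : ⟪u, u⟫ = 1 := by rw [real_inner_self_eq_norm_sq, hun]; norm_num
  have hee : ⟪e, e⟫ = 1 := by rw [real_inner_self_eq_norm_sq, he]; norm_num
  have heu : ⟪e, u⟫ = 0 := by rw [real_inner_comm, hue]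
  have hc0 : ⟪u, w⟫ ≤ 0 := interior_subset hu.2 w hwC
  have hc1 : -1 ≤ ⟪u, w⟫ := by
    have := abs_real_inner_le_norm u w
    rw [hun, hw, one_mul] at this
    exact (abs_le.1 this).1
  set θ := Real.arcsin (-⟪u, w⟫) with hθ
  have hθ0 : 0 ≤ θ := Real.arcsin_nonneg.2 (by linarith)
  have hsin : Real.sin θ = -⟪u, w⟫ := Real.sin_arcsin (by linarith) (by linarith)
  have hcos : Real.cos θ = √(1 - ⟪u, w⟫ ^ 2) := by rw [hθ, Real.cos_arcsin, neg_sq]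
  have hθ2 : θ ≤ Real.pi / 2 := Real.arcsin_le_pi_div_two _
  let γ : ℝ → En n := fun t => Real.cos t • u + Real.sin t • e
  have hγc : Continuous γ := by fun_prop
  have hγn : ∀ t, ‖γ t‖ = 1 := by
    intro t
    have : ‖γ t‖ ^ 2 = 1 := by
      rw [← real_inner_self_eq_norm_sq]
      simp only [γ, inner_add_left, inner_add_right, real_inner_smul_left, real_inner_smul_right,
        huu, hee, hue, heu]
      nlinarith [Real.sin_sq_add_cos_sq t]
    nlinarith [norm_nonneg (γ t)]
  have hmem : ∀ t, γ t ∈ omegaDual n C ↔ γ t ∈ interior (dualCone n C) := by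
    intro t
    simp [omegaDual, hγn t]
  have hend : γ θ ∉ interior (dualCone n C) := by
    intro hin
    have hort : ⟪γ θ, w⟫ = 0 := by
      simp only [γ, inner_add_left, real_inner_smul_left, hew, hsin, hcos]; ring
    have hcont : Continuous (fun ε : ℝ => γ θ + ε • w) := by fun_prop
    have hnh : ∀ᶠ ε in 𝓝 (0 : ℝ), γ θ + ε • w ∈ interior (dualCone n C) :=
      hcont.continuousAt.eventually (isOpen_interior.mem_nhds (by simpa using hin))
    obtain ⟨ε, hε, hεp⟩ := ((hnh.filter_mono nhdsWithin_le_nhds).and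
      (self_mem_nhdsWithin : Ioi (0 : ℝ) ∈ 𝓝[>] 0)).exists
    have := interior_subset hε w hwC
    rw [inner_add_left, hort, real_inner_smul_left, hww] at this
    linarith [hεp]
  have hcomp : IsCompact (Icc 0 θ ∩ γ ⁻¹' (interior (dualCone n C))ᶜ) :=
    isCompact_Icc.inter_right (isOpen_interior.isClosed_compl.preimage hγc)
  obtain ⟨s, ⟨hsI, hsn⟩, hmin⟩ := hcomp.exists_isLeast ⟨θ, ⟨hθ0, le_rfl⟩, hend⟩
  have hs0 : 0 < s := by
    rcases hsI.1.eq_or_lt with h | h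
    · exfalso
      apply hsn
      rw [← h]
      simpa [γ] using hu.2
    · exact h
  have hcl : γ s ∈ closure (omegaDual n C) := by
    have ht : Tendsto γ (𝓝[<] s) (𝓝 (γ s)) := hγc.continuousAt.tendsto.mono_left nhdsWithin_le_nhds
    refine mem_closure_of_tendsto ht ?_
    filter_upwards [Ioo_mem_nhdsLT hs0] with t ht
    rw [hmem]
    by_contra hcon
    have := hmin ⟨⟨ht.1.le, ht.2.le.trans hsI.2⟩, hcon⟩
    exact absurd ht.2 (not_lt.2 this)
  have hang : InnerProductGeometry.angle u (γ s) = s := by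
    have : ⟪u, γ s⟫ = Real.cos s := by
      simp only [γ, inner_add_right, real_inner_smul_right, huu, hue]; ring
    rw [InnerProductGeometry.angle, this, hun, hγn, mul_one, div_one,
      Real.arccos_cos hs0.le (by linarith [hsI.2, Real.pi_pos])]
  refine le_trans (csInf_le ⟨0, ?_⟩ ⟨u, huω, γ s, ⟨hcl, fun h => hsn ((hmem s).1 h)⟩, hang.symm⟩)
    hsI.2
  rintro d ⟨a, _, b, _, rfl⟩
  exact InnerProductGeometry.angle_nonneg _ _

/-- For `K ∈ ps(C)` and a Borel set `ω ⊆ Ω_{C°}` with `Δ(ω) > 0` one has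
`ν_K^{-1}(ω) ⊆ (b(K)/sin Δ(ω)) Bⁿ`. -/
theorem statement8 (n : ℕ) (hn : 2 ≤ n) (C : Set (En n)) (hC : IsGoodCone n C)
    (K : Set (En n)) (hK : IsCPseudoCone n C K)
    (ω : Set (En n)) (hω : MeasurableSet ω) (hωsub : ω ⊆ omegaDual n C)
    (hΔ : 0 < sphereAngleDist n C ω) :
    nuInv n K ω ⊆ Metric.closedBall 0 (distOrigin n K / Real.sin (sphereAngleDist n C ω)) := by
  rintro x ⟨hxf, u, huω, hun⟩
  have hxK : x ∈ K := hK.1.2.1.frontier_subset hxf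
  have hx0 : x ≠ 0 := fun h => hK.1.2.2.2.1 (h ▸ hxK)
  have hxn : 0 < ‖x‖ := norm_pos_iff.2 hx0
  have hu : u ∈ normalsAt n K x := by rw [hun]; rfl
  have hwC : ‖x‖⁻¹ • x ∈ C := hC.2.2.1 x (aux_subset n C K hK hxK) _ (by positivity)
  have hwn : ‖‖x‖⁻¹ • x‖ = 1 := by
    rw [norm_smul, norm_inv, norm_norm, inv_mul_cancel₀ hxn.ne']
  have hmain := aux_main n hn C ω u _ huω (hωsub huω) hwn hwC
  have hc0 : ⟪u, ‖x‖⁻¹ • x⟫ ≤ 0 := interior_subset (hωsub huω).2 _ hwC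
  have hc1 : -1 ≤ ⟪u, ‖x‖⁻¹ • x⟫ := by
    have := abs_real_inner_le_norm u (‖x‖⁻¹ • x)
    rw [hu.1, hwn, one_mul] at this
    exact (abs_le.1 this).1
  have hp := Real.arcsin_le_pi_div_two (-⟪u, ‖x‖⁻¹ • x⟫)
  have hsin : Real.sin (sphereAngleDist n C ω) ≤ -⟪u, ‖x‖⁻¹ • x⟫ := by
    rw [← Real.sin_arcsin (x := -⟪u, ‖x‖⁻¹ • x⟫) (by linarith) (by linarith)]
    exact Real.sin_le_sin_of_le_of_le_pi_div_two (by linarith [Real.pi_pos]) hp hmain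
  have hspos : 0 < Real.sin (sphereAngleDist n C ω) :=
    Real.sin_pos_of_pos_of_lt_pi hΔ (by linarith [Real.pi_pos])
  have hb : -⟪x, u⟫ ≤ distOrigin n K := by
    refine (Metric.le_infDist hK.1.1).2 fun z hz => ?_
    have h1 := hu.2 z hz
    have h2 := abs_real_inner_le_norm z u
    rw [hu.1, mul_one] at h2
    rw [dist_zero_left]
    linarith [(abs_le.1 h2).1]
  rw [mem_closedBall_zero_iff, le_div_iff₀ hspos]
  refine le_trans (mul_le_mul_of_nonneg_left hsin hxn.le) (le_trans (le_of_eq ?_) hb)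
  rw [real_inner_smul_right, real_inner_comm]
  field_simp
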